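/- For every complex number q with 0 < |q| < 1, one has ∑_{i,j,k,l ≥ 0} q^{2i²+2j²+2k²+2l²−2ij−2ik−2il+2jk+2jl−3i+3j+3k+2l} / ((q²;q²)_i (q²;q²)_j (q²;q²)_k (q²;q²)_l) = q^{−1} · J_6² / (J_1 J_3). -/

import Mathlib

open scoped BigOperators

/-- The infinite q-Pochhammer symbol `(a; q)_∞ = ∏_{k=0}^∞ (1 - a q^k)`. -/
noncomputable def qPochInf (a q : ℂ) : ℂ := ∏' n : ℕ, (1 - a * q ^ n)

/-- The finite q-Pochhammer symbol `(a; q)_n = ∏_{k=0}^{n-1} (1 - a q^k)`. -/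
noncomputable def qPoch (a q : ℂ) (n : ℕ) : ℂ :=
  Finset.prod (Finset.range n) (fun k => 1 - a * q ^ k)

/-- `J_m = (q^m; q^m)_∞`. -/
noncomputable def J (q : ℂ) (m : ℕ) : ℂ := qPochInf (q ^ m) (q ^ m)

/-- `J_{a,m} = (q^a; q^m)_∞ (q^{m-a}; q^m)_∞ (q^m; q^m)_∞`. -/
noncomputable def Jam (q : ℂ) (a m : ℕ) : ℂ :=
  qPochInf (q ^ a) (q ^ m) * qPochInf (q ^ (m - a)) (q ^ m) * qPochInf (q ^ m) (q ^ m)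

/-!
Write `P = (q²; q²)_∞`. For fixed `k`, `l` and `i - j`, the sum over `j` is a Durfee rectangle sum,
whose value is a power of `q` divided by `P`. What remains is grouped by `t = k - l` and involves
sums `c(t)` with `c(-t) = c(t)` and `c(t) + c(t + 1) = q^{t² + t} / P`. Averaging over a reflection
of the two remaining indices therefore eliminates the `c(t)` altogether and leaves a theta series of
the hexagonal lattice, which splits by the parity of one index into `2 ψ(q) ψ(q³)`. Finally
`ψ(q) = J_2² / J_1` by the Jacobi triple product, which itself comes from multiplying two of Euler's
series and summing along the diagonals with the Durfee identity.
-/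

open Filter Topology

section Pochhammer

lemma zpow_eq_mul_of_eq_add {G₀ : Type*} [GroupWithZero G₀] {q : G₀} (hq₀ : q ≠ 0) {a b c : ℤ}
    (h : a = b + c) : q ^ a = q ^ b * q ^ c := by
  rw [h, zpow_add₀ hq₀]

lemma norm_pow_lt_one {𝕜 : Type*} [NormedDivisionRing 𝕜] {q : 𝕜} (hq : ‖q‖ < 1) {n : ℕ}
    (hn : n ≠ 0) : ‖q ^ n‖ < 1 := by
  simpa only [norm_pow] using pow_lt_one₀ (norm_nonneg q) hq hn

variable {q : ℂ}

lemma norm_sq_lt_one (hq : ‖q‖ < 1) : ‖q ^ 2‖ < 1 :=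
  norm_pow_lt_one hq two_ne_zero

lemma one_sub_pow_ne_zero (hq : ‖q‖ < 1) {n : ℕ} (hn : n ≠ 0) : 1 - q ^ n ≠ 0 :=
  (isUnit_one_sub_of_norm_lt_one (norm_pow_lt_one hq hn)).ne_zero

lemma qPoch_self_succ (q : ℂ) (n : ℕ) : qPoch q q (n + 1) = qPoch q q n * (1 - q ^ (n + 1)) := by
  rw [qPoch, Finset.prod_range_succ, ← pow_succ', qPoch]

lemma qPoch_self_ne_zero (hq : ‖q‖ < 1) (n : ℕ) : qPoch q q n ≠ 0 :=
  Finset.prod_ne_zero_iff.mpr fun k _ => by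
    simpa only [← pow_succ'] using one_sub_pow_ne_zero hq k.succ_ne_zero

lemma summable_norm_mul_pow (hq : ‖q‖ < 1) (a : ℂ) : Summable fun n : ℕ => ‖a * q ^ n‖ := by
  simpa only [norm_mul] using (summable_norm_geometric_of_norm_lt_one hq).mul_left ‖a‖

lemma multipliable_one_sub_mul_pow (hq : ‖q‖ < 1) (a : ℂ) :
    Multipliable fun n : ℕ => 1 - a * q ^ n := by
  simpa only [neg_mul, ← sub_eq_add_neg] using
    multipliable_one_add_of_summable (summable_norm_mul_pow hq (-a))

lemma tendsto_qPoch (hq : ‖q‖ < 1) (a : ℂ) :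
    Tendsto (qPoch a q) atTop (𝓝 (qPochInf a q)) :=
  (multipliable_one_sub_mul_pow hq a).tendsto_prod_tprod_nat

lemma qPochInf_self_ne_zero (hq : ‖q‖ < 1) : qPochInf q q ≠ 0 := by
  have hne (n : ℕ) : 1 + -q * q ^ n ≠ 0 := by
    simpa only [neg_mul, ← sub_eq_add_neg, ← pow_succ'] using
      one_sub_pow_ne_zero hq n.succ_ne_zero
  simpa only [qPochInf, neg_mul, ← sub_eq_add_neg] using
    tprod_one_add_ne_zero_of_summable hne (summable_norm_mul_pow hq (-q))

lemma qPochInf_sq_mul_qPochInf_sq (hq : ‖q‖ < 1) (a : ℂ) :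
    qPochInf a (q ^ 2) * qPochInf (a * q) (q ^ 2) = qPochInf a q := by
  have heven (n : ℕ) : 1 - a * (q ^ 2) ^ n = 1 - a * q ^ (2 * n) := by rw [pow_mul]
  have hodd (n : ℕ) : 1 - a * q * (q ^ 2) ^ n = 1 - a * q ^ (2 * n + 1) := by
    rw [← pow_mul, mul_assoc, ← pow_succ']
  simp only [qPochInf, heven, hodd]
  exact tprod_even_mul_odd (f := fun n => 1 - a * q ^ n)
    ((multipliable_one_sub_mul_pow (norm_sq_lt_one hq) a).congr heven)
    ((multipliable_one_sub_mul_pow (norm_sq_lt_one hq) (a * q)).congr hodd)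

lemma qPochInf_mul_qPochInf_neg (hq : ‖q‖ < 1) (a : ℂ) :
    qPochInf a q * qPochInf (-a) q = qPochInf (a ^ 2) (q ^ 2) := by
  rw [qPochInf, qPochInf, ← (multipliable_one_sub_mul_pow hq a).tprod_mul
    (multipliable_one_sub_mul_pow hq (-a)), qPochInf]
  exact tprod_congr fun n => by ring

end Pochhammer

section Euler

variable {q : ℂ}

lemma summable_norm_euler (hq : ‖q‖ < 1) (z : ℂ) :
    Summable fun n : ℕ => ‖q ^ n.choose 2 * z ^ n / qPoch q q n‖ := by
  have hpow := tendsto_pow_atTop_nhds_zero_of_norm_lt_one hq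
  have hratio : Tendsto (fun n : ℕ => ‖q ^ n * z / (1 - q ^ (n + 1))‖) atTop (𝓝 0) := by
    simpa using ((hpow.mul_const z).div
      (((tendsto_add_atTop_iff_nat 1).mpr hpow).const_sub 1) (by simp)).norm
  refine summable_of_ratio_norm_eventually_le (r := 1 / 2) (by norm_num) ?_
  filter_upwards [hratio.eventually_le_const one_half_pos] with n hn
  have hterm : q ^ (n + 1).choose 2 * z ^ (n + 1) / qPoch q q (n + 1) =
      q ^ n * z / (1 - q ^ (n + 1)) * (q ^ n.choose 2 * z ^ n / qPoch q q n) := by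
    rw [qPoch_self_succ, Nat.choose_succ_succ' n 1, Nat.choose_one_right, div_mul_div_comm]
    congr 1 <;> ring
  rw [hterm, norm_norm, norm_norm, norm_mul]
  gcongr

lemma tsum_euler_eq_one_add_mul (hq : ‖q‖ < 1) (z : ℂ) :
    ∑' n : ℕ, q ^ n.choose 2 * z ^ n / qPoch q q n =
      (1 + z) * ∑' n : ℕ, q ^ n.choose 2 * (z * q) ^ n / qPoch q q n := by
  have hs (z : ℂ) := (summable_norm_euler hq z).of_norm
  have hsucc (n : ℕ) : q ^ (n + 1).choose 2 * z ^ (n + 1) / qPoch q q (n + 1) -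
      q ^ (n + 1).choose 2 * (z * q) ^ (n + 1) / qPoch q q (n + 1) =
      z * (q ^ n.choose 2 * (z * q) ^ n / qPoch q q n) := by
    have := qPoch_self_ne_zero hq n
    have := one_sub_pow_ne_zero hq n.succ_ne_zero
    rw [qPoch_self_succ, Nat.choose_succ_succ' n 1, Nat.choose_one_right]
    field_simp
    ring
  rw [add_mul, one_mul, ← sub_eq_iff_eq_add', ← (hs z).tsum_sub (hs (z * q)),
    ((hs z).sub (hs (z * q))).tsum_eq_zero_add, ← tsum_mul_left]
  simp only [hsucc]
  simp

lemma tsum_euler_eq_qPoch_mul (hq : ‖q‖ < 1) (z : ℂ) (N : ℕ) :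
    ∑' n : ℕ, q ^ n.choose 2 * z ^ n / qPoch q q n =
      qPoch (-z) q N * ∑' n : ℕ, q ^ n.choose 2 * (z * q ^ N) ^ n / qPoch q q n := by
  induction N with
  | zero => simp [qPoch]
  | succ N ih =>
    rw [ih, tsum_euler_eq_one_add_mul hq (z * q ^ N), ← mul_assoc, mul_assoc z, ← pow_succ]
    simp only [qPoch, Finset.prod_range_succ, neg_mul, sub_neg_eq_add]

lemma tendsto_tsum_euler (hq : ‖q‖ < 1) (z : ℂ) :
    Tendsto (fun N : ℕ => ∑' n : ℕ, q ^ n.choose 2 * (z * q ^ N) ^ n / qPoch q q n)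
      atTop (𝓝 1) := by
  have hterm (N n : ℕ) : q ^ n.choose 2 * (z * q ^ N) ^ n / qPoch q q n =
      q ^ n.choose 2 * z ^ n / qPoch q q n * (q ^ n) ^ N := by
    rw [mul_pow, pow_right_comm]
    ring
  have hlim (n : ℕ) : Tendsto (fun N : ℕ => q ^ n.choose 2 * (z * q ^ N) ^ n / qPoch q q n)
      atTop (𝓝 (if n = 0 then 1 else 0)) := by
    rcases eq_or_ne n 0 with rfl | hn
    · simp [qPoch]
    · have hqn : ‖q ^ n‖ < 1 := norm_pow_lt_one hq hn
      simpa only [hterm, if_neg hn, mul_zero] using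
        (tendsto_pow_atTop_nhds_zero_of_norm_lt_one hqn).const_mul
          (q ^ n.choose 2 * z ^ n / qPoch q q n)
  have hbound (N n : ℕ) : ‖q ^ n.choose 2 * (z * q ^ N) ^ n / qPoch q q n‖ ≤
      ‖q ^ n.choose 2 * z ^ n / qPoch q q n‖ := by
    rw [hterm, norm_mul, ← pow_mul, norm_pow q]
    exact mul_le_of_le_one_right (norm_nonneg _) (pow_le_one₀ (norm_nonneg q) hq.le)
  simpa using tendsto_tsum_of_dominated_convergence (summable_norm_euler hq z) hlim
    (.of_forall hbound)

theorem tsum_euler (hq : ‖q‖ < 1) (z : ℂ) :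
    ∑' n : ℕ, q ^ n.choose 2 * z ^ n / qPoch q q n = qPochInf (-z) q := by
  refine tendsto_nhds_unique tendsto_const_nhds ?_ (f := fun _ : ℕ => _) (l := atTop)
  simpa only [← tsum_euler_eq_qPoch_mul hq z, mul_one] using
    (tendsto_qPoch hq (-z)).mul (tendsto_tsum_euler hq z)

end Euler

section InvQPoch

/-- The reciprocal `1 / (q; q)_n` extended by zero to negative `n`, so that the recursion
`1 / (q; q)_{n-1} = (1 - q^n) / (q; q)_n` holds for every integer `n` and summation indices can be
shifted freely. -/
noncomputable def invQPoch (q : ℂ) : ℤ → ℂ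
  | .ofNat n => (qPoch q q n)⁻¹
  | .negSucc _ => 0

variable {q : ℂ}

@[simp] lemma invQPoch_natCast (q : ℂ) (n : ℕ) : invQPoch q n = (qPoch q q n)⁻¹ := rfl

lemma support_invQPoch_subset_range_natCast (q : ℂ) :
    Function.support (invQPoch q) ⊆ Set.range ((↑) : ℕ → ℤ)
  | .ofNat n, _ => ⟨n, rfl⟩
  | .negSucc _, h => absurd rfl h

lemma invQPoch_of_neg (q : ℂ) {n : ℤ} (hn : n < 0) : invQPoch q n = 0 := by
  by_contra h
  obtain ⟨m, rfl⟩ := support_invQPoch_subset_range_natCast q h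
  exact absurd hn m.cast_nonneg.not_gt

lemma invQPoch_sub_one (hq : ‖q‖ < 1) (n : ℤ) :
    invQPoch q (n - 1) = (1 - q ^ n) * invQPoch q n := by
  rcases lt_trichotomy n 0 with hn | rfl | hn
  · rw [invQPoch_of_neg q hn, invQPoch_of_neg q (by omega), mul_zero]
  · rw [invQPoch_of_neg q (by norm_num), zpow_zero, sub_self, zero_mul]
  · obtain ⟨k, rfl⟩ : ∃ k : ℕ, n = (k + 1 : ℕ) := ⟨(n - 1).toNat, by omega⟩
    rw [Nat.cast_succ, add_sub_cancel_right, ← Nat.cast_succ, zpow_natCast, invQPoch_natCast,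
      invQPoch_natCast, qPoch_self_succ, mul_inv_rev,
      mul_inv_cancel_left₀ (one_sub_pow_ne_zero hq k.succ_ne_zero)]

lemma tendsto_invQPoch (hq : ‖q‖ < 1) :
    Tendsto (fun n : ℕ => invQPoch q n) atTop (𝓝 (qPochInf q q)⁻¹) :=
  (tendsto_qPoch hq q).inv₀ (qPochInf_self_ne_zero hq)

lemma exists_norm_invQPoch_le (hq : ‖q‖ < 1) : ∃ C : ℝ, ∀ n, ‖invQPoch q n‖ ≤ C := by
  obtain ⟨C, hC⟩ := (Metric.isBounded_range_of_tendsto _ (tendsto_invQPoch hq)).exists_norm_le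
  refine ⟨C, fun n => ?_⟩
  rcases lt_or_ge n 0 with hn | hn
  · rw [invQPoch_of_neg q hn, norm_zero]
    exact (norm_nonneg _).trans (hC _ ⟨0, rfl⟩)
  · lift n to ℕ using hn
    exact hC _ ⟨n, rfl⟩

lemma tsum_mul_invQPoch (q : ℂ) (f : ℤ → ℂ) :
    ∑' n : ℤ, f n * invQPoch q n = ∑' n : ℕ, f n / qPoch q q n :=
  (Nat.cast_injective.tsum_eq ((Function.support_mul_subset_right f _).trans
    (support_invQPoch_subset_range_natCast q))).symm

lemma summable_norm_mul_invQPoch (hq : ‖q‖ < 1) {ι : Type*} {f : ι → ℂ}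
    (hf : Summable fun i => ‖f i‖) (n : ι → ℤ) :
    Summable fun i => ‖f i * invQPoch q (n i)‖ := by
  obtain ⟨C, hC⟩ := exists_norm_invQPoch_le hq
  refine .of_nonneg_of_le (fun _ => norm_nonneg _) (fun i => ?_) (hf.mul_right C)
  rw [norm_mul]
  gcongr
  exact hC _

end InvQPoch

section Theta

variable {q : ℂ}

lemma summable_norm_pow_sq_mul_pow (hq : ‖q‖ < 1) (z : ℂ) :
    Summable fun n : ℕ => ‖q ^ n ^ 2 * z ^ n‖ := by
  have hratio : Tendsto (fun n : ℕ => ‖q * z * (q ^ 2) ^ n‖) atTop (𝓝 0) := by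
    simpa using ((tendsto_pow_atTop_nhds_zero_of_norm_lt_one (norm_sq_lt_one hq)).const_mul
      (q * z)).norm
  refine summable_of_ratio_norm_eventually_le (r := 1 / 2) (by norm_num) ?_
  filter_upwards [hratio.eventually_le_const one_half_pos] with n hn
  have hterm : q ^ (n + 1) ^ 2 * z ^ (n + 1) = q * z * (q ^ 2) ^ n * (q ^ n ^ 2 * z ^ n) := by
    ring
  rw [hterm, norm_norm, norm_norm, norm_mul]
  gcongr

lemma summable_norm_zpow_sq_mul_zpow (hq : ‖q‖ < 1) (z : ℂ) :
    Summable fun n : ℤ => ‖q ^ n ^ 2 * z ^ n‖ := by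
  refine .of_nat_of_neg ?_ ?_
  · exact mod_cast summable_norm_pow_sq_mul_pow hq z
  · simpa only [neg_sq, zpow_neg, ← inv_zpow] using
      mod_cast summable_norm_pow_sq_mul_pow hq z⁻¹

lemma summable_norm_zpow_quadratic (hq₀ : q ≠ 0) (hq : ‖q‖ < 1) {a : ℕ} (ha : a ≠ 0) (b c : ℤ) :
    Summable fun n : ℤ => ‖q ^ (a * n ^ 2 + b * n + c)‖ := by
  have hqa : ‖q ^ a‖ < 1 := norm_pow_lt_one hq ha
  refine ((summable_norm_zpow_sq_mul_zpow hqa (q ^ b)).mul_right ‖q ^ c‖).congr fun n => ?_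
  rw [← norm_mul, ← zpow_natCast, ← zpow_mul, ← zpow_mul, ← zpow_add₀ hq₀, ← zpow_add₀ hq₀]

end Theta

section Durfee

/-- The sum `∑_j q^{j(j+m)} / ((q; q)_j (q; q)_{j+m})`, which enumerates partitions by their Durfee
rectangle of size `j × (j + m)`. -/
noncomputable def durfeeSum (q : ℂ) (m : ℤ) : ℂ :=
  ∑' j : ℤ, q ^ (j * (j + m)) * invQPoch q (j + m) * invQPoch q j

variable {q : ℂ}

lemma summable_durfee (hq₀ : q ≠ 0) (hq : ‖q‖ < 1) (m a b : ℤ) :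
    Summable fun j : ℤ => q ^ (j * (j + m)) * invQPoch q (j + a) * invQPoch q (j + b) := by
  refine (summable_norm_mul_invQPoch hq (summable_norm_mul_invQPoch hq ?_ _) _).of_norm
  refine (summable_norm_zpow_quadratic hq₀ hq one_ne_zero m 0).congr fun j => ?_
  congr 2
  push_cast
  ring

lemma durfeeSum_neg (q : ℂ) (m : ℤ) : durfeeSum q (-m) = durfeeSum q m := by
  rw [durfeeSum, durfeeSum, ← (Equiv.addRight m).tsum_eq]
  refine tsum_congr fun j => ?_
  rw [Equiv.coe_addRight, add_neg_cancel_right, mul_comm j, mul_right_comm]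

-- With `A_j = q^{j(j+m)} / ((q; q)_{j+m+1} (q; q)_j)`, the terms of `D_m`, `D_{m+1}` and (after
-- `j ↦ j - 1`) `q^{m+1} D_{m+2}` are `(1 - q^{j+m+1}) A_j`, `q^j A_j` and `(1 - q^j) A_j`.
lemma durfeeSum_sub_durfeeSum_succ (hq₀ : q ≠ 0) (hq : ‖q‖ < 1) (m : ℤ) :
    durfeeSum q m - durfeeSum q (m + 1) =
      q ^ (m + 1) * (durfeeSum q (m + 2) - durfeeSum q (m + 1)) := by
  have hshift : q ^ (m + 1) * durfeeSum q (m + 2) =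
      ∑' j : ℤ, q ^ (j * (j + m)) * invQPoch q (j + (m + 1)) * invQPoch q (j + -1) := by
    rw [durfeeSum, ← tsum_mul_left, ← (Equiv.subRight (1 : ℤ)).tsum_eq]
    refine tsum_congr fun j => ?_
    rw [Equiv.subRight_apply, ← mul_assoc, ← mul_assoc, ← zpow_add₀ hq₀]
    ring_nf
  have hs (m : ℤ) :
      Summable fun j : ℤ => q ^ (j * (j + m)) * invQPoch q (j + m) * invQPoch q j := by
    simpa only [add_zero] using summable_durfee hq₀ hq m m 0
  rw [mul_sub, hshift, durfeeSum, durfeeSum, ← (hs m).tsum_sub (hs (m + 1)), ← tsum_mul_left,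
    ← (summable_durfee hq₀ hq m _ _).tsum_sub ((hs (m + 1)).mul_left _)]
  refine tsum_congr fun j => ?_
  have hrec : invQPoch q (j + m) = (1 - q ^ (j + (m + 1))) * invQPoch q (j + (m + 1)) := by
    rw [← invQPoch_sub_one hq, ← add_assoc, add_sub_cancel_right]
  have hexp₁ : q ^ (j * (j + (m + 1))) = q ^ (j * (j + m)) * q ^ j :=
    zpow_eq_mul_of_eq_add hq₀ (by ring)
  rw [← sub_eq_add_neg, invQPoch_sub_one hq j, hrec, hexp₁, zpow_add₀ hq₀ j]
  ring

lemma tendsto_durfeeSum (hq : ‖q‖ < 1) :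
    Tendsto (fun m : ℕ => durfeeSum q m) atTop (𝓝 (qPochInf q q)⁻¹) := by
  obtain ⟨C, hC⟩ := exists_norm_invQPoch_le hq
  have hC₀ : 0 ≤ C := (norm_nonneg _).trans (hC 0)
  let term (m j : ℕ) : ℂ := q ^ j ^ 2 * (q ^ j) ^ m * invQPoch q (m + j : ℕ) * invQPoch q j
  have hsum (m : ℕ) : durfeeSum q m = ∑' j : ℕ, term m j := by
    rw [durfeeSum, tsum_mul_invQPoch]
    refine tsum_congr fun j => ?_
    rw [← Nat.cast_add, ← Nat.cast_mul, zpow_natCast, mul_add, pow_add, pow_mul q j m, ← sq,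
      add_comm j m]
    rfl
  have hbound (m j : ℕ) : ‖term m j‖ ≤ ‖q ^ j ^ 2 * 1 ^ j‖ * (1 * C * C) := by
    simp only [term, norm_mul, one_pow, mul_one, mul_assoc]
    gcongr
    · simpa only [norm_pow] using
        pow_le_one₀ (by positivity) (pow_le_one₀ (norm_nonneg q) hq.le)
    · exact hC _
    · exact hC _
  have hlim (j : ℕ) : Tendsto (term · j) atTop
      (𝓝 (if j = 0 then (qPochInf q q)⁻¹ else 0)) := by
    rcases eq_or_ne j 0 with rfl | hj
    · simpa [term, qPoch] using tendsto_invQPoch hq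
    · have hqj : ‖q ^ j‖ < 1 := norm_pow_lt_one hq hj
      simpa only [if_neg hj, mul_zero, zero_mul, Function.comp_def] using
        (((tendsto_pow_atTop_nhds_zero_of_norm_lt_one hqj).const_mul (q ^ j ^ 2)).mul
          ((tendsto_invQPoch hq).comp (tendsto_add_atTop_nat j))).mul_const (invQPoch q j)
  simpa only [hsum, tsum_ite_eq] using tendsto_tsum_of_dominated_convergence
    ((summable_norm_pow_sq_mul_pow hq 1).mul_right (1 * C * C)) hlim (.of_forall hbound)

-- The differences `D_m - D_{m+1}` tend to `0`, but by the recursion their norms increase with `m`.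
lemma durfeeSum_succ (hq₀ : q ≠ 0) (hq : ‖q‖ < 1) (m : ℕ) :
    durfeeSum q (m + 1) = durfeeSum q m := by
  set d : ℕ → ℂ := fun m => durfeeSum q m - durfeeSum q (m + 1) with hd
  have hd_tendsto : Tendsto (fun m => ‖d m‖) atTop (𝓝 0) := by
    have hD := tendsto_durfeeSum hq
    simpa [hd] using (hD.sub ((tendsto_add_atTop_iff_nat 1).mpr hD)).norm
  have hd_mono : Monotone fun m => ‖d m‖ := monotone_nat_of_le_succ fun m => by
    have hrec : d m = q ^ (m + 1) * -d (m + 1) := by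
      simpa [hd, add_assoc, one_add_one_eq_two] using
        mod_cast durfeeSum_sub_durfeeSum_succ hq₀ hq m
    rw [hrec, norm_mul, norm_neg, norm_pow]
    exact mul_le_of_le_one_left (norm_nonneg _) (pow_le_one₀ (norm_nonneg q) hq.le)
  exact (sub_eq_zero.mp (norm_le_zero_iff.mp (hd_mono.ge_of_tendsto hd_tendsto m))).symm

theorem durfeeSum_eq (hq₀ : q ≠ 0) (hq : ‖q‖ < 1) (m : ℤ) :
    durfeeSum q m = (qPochInf q q)⁻¹ := by
  have hconst (m : ℕ) : durfeeSum q m = durfeeSum q (0 : ℕ) := by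
    induction m with
    | zero => rfl
    | succ m ih => rw [Nat.cast_succ, durfeeSum_succ hq₀ hq, ih]
  have hnat (m : ℕ) : durfeeSum q m = (qPochInf q q)⁻¹ := by
    have hD := tendsto_durfeeSum hq
    simp only [hconst] at hD
    rw [hconst, tendsto_nhds_unique tendsto_const_nhds hD]
  obtain ⟨k, rfl | rfl⟩ := m.eq_nat_or_neg
  · exact hnat k
  · rw [durfeeSum_neg, hnat]

theorem hasSum_durfee (hq₀ : q ≠ 0) (hq : ‖q‖ < 1) (m : ℤ) :
    HasSum (fun j : ℤ => q ^ (j * (j + m)) * invQPoch q (j + m) * invQPoch q j)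
      (qPochInf q q)⁻¹ := by
  have hs := (summable_durfee hq₀ hq m m 0).hasSum
  simp only [add_zero] at hs
  rwa [← durfeeSum_eq hq₀ hq m]

theorem hasSum_zpow_sq_add_sq_mul_invQPoch (hq₀ : q ≠ 0) (hq : ‖q‖ < 1) (m : ℤ) :
    HasSum (fun j : ℤ => q ^ ((j + m) ^ 2 + j ^ 2) *
      invQPoch (q ^ 2) (j + m) * invQPoch (q ^ 2) j) (q ^ m ^ 2 / qPochInf (q ^ 2) (q ^ 2)) := by
  rw [div_eq_mul_inv]
  refine ((hasSum_durfee (pow_ne_zero 2 hq₀) (norm_sq_lt_one hq) m).mul_left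
    (q ^ m ^ 2)).congr_fun fun j => ?_
  have hexp : q ^ ((j + m) ^ 2 + j ^ 2) = q ^ m ^ 2 * (q ^ 2) ^ (j * (j + m)) := by
    rw [← zpow_natCast q 2, ← zpow_mul]
    exact zpow_eq_mul_of_eq_add hq₀ (by push_cast; ring)
  rw [hexp]
  ring

end Durfee

section JacobiTripleProduct

variable {q : ℂ}

lemma tsum_zpow_sq_mul_zpow_mul_invQPoch (hq : ‖q‖ < 1) (z : ℂ) :
    ∑' n : ℤ, q ^ n ^ 2 * z ^ n * invQPoch (q ^ 2) n = qPochInf (-(z * q)) (q ^ 2) := by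
  rw [tsum_mul_invQPoch, ← tsum_euler (norm_sq_lt_one hq)]
  refine tsum_congr fun n => ?_
  have hsq : n ^ 2 = 2 * n.choose 2 + n := by
    induction n with
    | zero => rfl
    | succ n ih => rw [Nat.choose_succ_succ' n 1, Nat.choose_one_right]; linarith
  rw [← pow_mul, mul_pow, mul_left_comm, ← pow_add, ← hsq, mul_comm]
  norm_cast

/-- The linear change of summation indices `(m, j) ↦ (j + m, j)`. -/
def shearEquiv : ℤ × ℤ ≃ ℤ × ℤ where
  toFun x := (x.2 + x.1, x.2)
  invFun x := (x.1 - x.2, x.2)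
  left_inv x := by simp
  right_inv x := by simp

theorem jacobi_triple_product (hq₀ : q ≠ 0) (hq : ‖q‖ < 1) {z : ℂ} (hz : z ≠ 0) :
    ∑' n : ℤ, q ^ n ^ 2 * z ^ n =
      qPochInf (-(z * q)) (q ^ 2) * qPochInf (-(z⁻¹ * q)) (q ^ 2) * qPochInf (q ^ 2) (q ^ 2) := by
  have hs (z : ℂ) := summable_norm_mul_invQPoch (norm_sq_lt_one hq)
    (summable_norm_zpow_sq_mul_zpow hq z) id
  have hinner (m : ℤ) : HasSum (fun j : ℤ =>
      q ^ (j + m) ^ 2 * z ^ (j + m) * invQPoch (q ^ 2) (j + m) *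
        (q ^ j ^ 2 * z⁻¹ ^ j * invQPoch (q ^ 2) j))
      (q ^ m ^ 2 * z ^ m / qPochInf (q ^ 2) (q ^ 2)) := by
    rw [mul_comm (q ^ m ^ 2), mul_div_assoc]
    refine ((hasSum_zpow_sq_add_sq_mul_invQPoch hq₀ hq m).mul_left (z ^ m)).congr_fun fun j => ?_
    rw [zpow_add₀ hq₀, zpow_add₀ hz, inv_zpow]
    field_simp
  have hprod := shearEquiv.hasSum_iff.mpr (summable_mul_of_summable_norm (hs z) (hs z⁻¹)).hasSum
  rw [← tsum_mul_tsum_of_summable_norm (hs z) (hs z⁻¹)] at hprod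
  have hsum := (hprod.prod_fiberwise hinner).tsum_eq
  simp only [id, tsum_zpow_sq_mul_zpow_mul_invQPoch hq, tsum_div_const] at hsum
  rw [← hsum, div_mul_cancel₀ _ (qPochInf_self_ne_zero (norm_sq_lt_one hq))]

/-- Ramanujan's theta function `ψ(q) = ∑_{n ≥ 0} q^{n(n+1)/2}`, written as a bilateral sum: the
numbers `2n² + n`, `n ∈ ℤ`, are the triangular numbers, each taken once. -/
noncomputable def ramanujanPsi (q : ℂ) : ℂ := ∑' n : ℤ, q ^ (2 * n ^ 2 + n)

lemma summable_norm_ramanujanPsi (hq₀ : q ≠ 0) (hq : ‖q‖ < 1) :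
    Summable fun n : ℤ => ‖q ^ (2 * n ^ 2 + n)‖ := by
  simpa using summable_norm_zpow_quadratic hq₀ hq two_ne_zero 1 0

lemma J_ne_zero (hq : ‖q‖ < 1) {m : ℕ} (hm : m ≠ 0) : J q m ≠ 0 :=
  qPochInf_self_ne_zero (norm_pow_lt_one hq hm)

lemma J_pow (q : ℂ) (m n : ℕ) : J (q ^ m) n = J q (m * n) := by
  rw [J, J, pow_mul]

lemma ramanujanPsi_eq_qPochInf (hq₀ : q ≠ 0) (hq : ‖q‖ < 1) :
    ramanujanPsi q = qPochInf (-q) (q ^ 2) * J q 4 := by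
  have hexp (n : ℤ) : q ^ (2 * n ^ 2 + n) = (q ^ 2) ^ n ^ 2 * q ^ n := by
    rw [zpow_add₀ hq₀, zpow_mul]
    norm_cast
  have hsplit := qPochInf_sq_mul_qPochInf_sq (norm_sq_lt_one hq) (-q)
  have hinv : q⁻¹ * q ^ 2 = q := by rw [sq, inv_mul_cancel_left₀ hq₀]
  simp only [ramanujanPsi, hexp]
  rw [jacobi_triple_product (pow_ne_zero 2 hq₀) (norm_sq_lt_one hq) hq₀, hinv, ← neg_mul,
    mul_comm (qPochInf _ _), hsplit, ← pow_mul, J]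

theorem ramanujanPsi_eq (hq₀ : q ≠ 0) (hq : ‖q‖ < 1) :
    ramanujanPsi q = J q 2 ^ 2 / J q 1 := by
  have hJ₁ : J q 1 = qPochInf q (q ^ 2) * J q 2 := by
    rw [J, J, pow_one, ← qPochInf_sq_mul_qPochInf_sq hq q, ← sq]
  have hJ₂ : J q 2 = qPochInf q (q ^ 2) * qPochInf (-q) (q ^ 2) * J q 4 := by
    rw [qPochInf_mul_qPochInf_neg (norm_sq_lt_one hq) q, J, J,
      ← qPochInf_sq_mul_qPochInf_sq (norm_sq_lt_one hq) (q ^ 2), ← pow_add, ← pow_mul]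
  rw [ramanujanPsi_eq_qPochInf hq₀ hq, eq_div_iff (J_ne_zero hq one_ne_zero), hJ₁]
  linear_combination (-J q 2) * hJ₂

end JacobiTripleProduct

section HexagonalTheta

variable {q : ℂ}

lemma hasSum_ramanujanPsi_mul_ramanujanPsi_pow_three (hq₀ : q ≠ 0) (hq : ‖q‖ < 1) :
    HasSum (fun x : ℤ × ℤ => q ^ (2 * x.1 ^ 2 + x.1 + (6 * x.2 ^ 2 + 3 * x.2)))
      (ramanujanPsi q * ramanujanPsi (q ^ 3)) := by
  have hq₃ : ‖q ^ 3‖ < 1 := norm_pow_lt_one hq three_ne_zero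
  have hψ := summable_norm_ramanujanPsi hq₀ hq
  have hψ₃ := summable_norm_ramanujanPsi (pow_ne_zero 3 hq₀) hq₃
  rw [ramanujanPsi, ramanujanPsi, tsum_mul_tsum_of_summable_norm hψ hψ₃]
  refine (summable_mul_of_summable_norm hψ hψ₃).hasSum.congr_fun fun x => ?_
  rw [← zpow_natCast q 3, ← zpow_mul]
  exact zpow_eq_mul_of_eq_add hq₀ (by push_cast; ring)

/-- Coordinates on `ℤ × ℤ`, one copy for each parity of the second entry, which diagonalize the
quadratic polynomial `2s² - 2su + 2u² + 2u - s`. -/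
def hexagonalCoords : (ℤ × ℤ) ⊕ (ℤ × ℤ) → ℤ × ℤ :=
  Sum.elim (fun x => (x.2 - x.1, 2 * x.2)) (fun x => (x.1 - x.2, -2 * x.2 - 1))

lemma bijective_hexagonalCoords : Function.Bijective hexagonalCoords := by
  constructor
  · rintro (⟨a, c⟩ | ⟨a, c⟩) (⟨a', c'⟩ | ⟨a', c'⟩) h <;>
      simp only [hexagonalCoords, Sum.elim_inl, Sum.elim_inr, Prod.mk.injEq, Sum.inl.injEq,
        Sum.inr.injEq, reduceCtorEq] at h ⊢ <;> omega
  · rintro ⟨s, u⟩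
    obtain ⟨c, rfl | rfl⟩ := u.even_or_odd'
    · exact ⟨.inl (c - s, c), by simp [hexagonalCoords]⟩
    · exact ⟨.inr (s - c - 1, -c - 1), by ext <;> simp [hexagonalCoords]; ring⟩

theorem hasSum_hexagonalTheta (hq₀ : q ≠ 0) (hq : ‖q‖ < 1) :
    HasSum (fun x : ℤ × ℤ => q ^ (2 * x.1 ^ 2 - 2 * x.1 * x.2 + 2 * x.2 ^ 2 + 2 * x.2 - x.1))
      (2 * (ramanujanPsi q * ramanujanPsi (q ^ 3))) := by
  have hψ := hasSum_ramanujanPsi_mul_ramanujanPsi_pow_three hq₀ hq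
  rw [two_mul, ← (Equiv.ofBijective _ bijective_hexagonalCoords).hasSum_iff]
  refine HasSum.sum (hψ.congr_fun fun x => ?_) (hψ.congr_fun fun x => ?_) <;>
    refine congrArg (q ^ ·) ?_ <;>
    simp only [hexagonalCoords, Equiv.ofBijective_apply, Sum.elim_inl, Sum.elim_inr] <;>
    ring

end HexagonalTheta

section PairSum

/-- The sum of `q^{k² + l² + k + l} / ((q²; q²)_k (q²; q²)_l)` over all `k, l` with `k - l = t`. -/
noncomputable def pairSum (q : ℂ) (t : ℤ) : ℂ :=
  ∑' l : ℤ, q ^ ((l + t) ^ 2 + l ^ 2 + (l + t) + l) *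
    invQPoch (q ^ 2) (l + t) * invQPoch (q ^ 2) l

variable {q : ℂ}

lemma hasSum_pairSum (hq₀ : q ≠ 0) (hq : ‖q‖ < 1) (t : ℤ) :
    HasSum (fun l : ℤ => q ^ ((l + t) ^ 2 + l ^ 2 + (l + t) + l) *
      invQPoch (q ^ 2) (l + t) * invQPoch (q ^ 2) l) (pairSum q t) := by
  have hq₂ := norm_sq_lt_one hq
  refine (summable_norm_mul_invQPoch hq₂ (summable_norm_mul_invQPoch hq₂ ?_ _) _).of_norm.hasSum
  refine (summable_norm_zpow_quadratic hq₀ hq two_ne_zero (2 * t + 2) (t ^ 2 + t)).congr fun l => ?_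
  congr 2
  push_cast
  ring

lemma pairSum_neg (q : ℂ) (t : ℤ) : pairSum q (-t) = pairSum q t := by
  rw [pairSum, pairSum, ← (Equiv.addRight t).tsum_eq]
  refine tsum_congr fun l => ?_
  rw [Equiv.coe_addRight, add_neg_cancel_right, mul_right_comm]
  ring_nf

lemma pairSum_add_pairSum_succ (hq₀ : q ≠ 0) (hq : ‖q‖ < 1) (t : ℤ) :
    pairSum q t + pairSum q (t + 1) = q ^ (t ^ 2 + t) / qPochInf (q ^ 2) (q ^ 2) := by
  have hdurfee := (hasSum_zpow_sq_add_sq_mul_invQPoch hq₀ hq (t + 1)).mul_left (q ^ (-t - 1))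
  rw [← mul_div_assoc, ← zpow_add₀ hq₀] at hdurfee
  have hexp : t ^ 2 + t = -t - 1 + (t + 1) ^ 2 := by ring
  rw [hexp]
  refine ((hasSum_pairSum hq₀ hq t).add (hasSum_pairSum hq₀ hq (t + 1))).unique
    (hdurfee.congr_fun fun l => ?_)
  have hrec : invQPoch (q ^ 2) (l + t) =
      (1 - q ^ (2 * (l + (t + 1)))) * invQPoch (q ^ 2) (l + (t + 1)) := by
    rw [zpow_mul, zpow_ofNat, ← invQPoch_sub_one (norm_sq_lt_one hq), ← add_assoc,
      add_sub_cancel_right]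
  have hexp₁ : q ^ ((l + t) ^ 2 + l ^ 2 + (l + t) + l) =
      q ^ (-t - 1) * q ^ ((l + (t + 1)) ^ 2 + l ^ 2) := zpow_eq_mul_of_eq_add hq₀ (by ring)
  have hexp₂ : q ^ ((l + (t + 1)) ^ 2 + l ^ 2 + (l + (t + 1)) + l) =
      q ^ ((l + t) ^ 2 + l ^ 2 + (l + t) + l) * q ^ (2 * (l + (t + 1))) :=
    zpow_eq_mul_of_eq_add hq₀ (by ring)
  rw [hexp₂, hexp₁, hrec]
  ring

end PairSum

section NahmSum

/-- The quadratic polynomial in the exponent of the fourfold sum. -/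
def nahmExponent (i j k l : ℤ) : ℤ :=
  2 * i ^ 2 + 2 * j ^ 2 + 2 * k ^ 2 + 2 * l ^ 2 - 2 * i * j - 2 * i * k - 2 * i * l +
    2 * j * k + 2 * j * l - 3 * i + 3 * j + 3 * k + 2 * l

/-- The `(i, j, k, l)` term of the fourfold sum, extended by zero from `ℕ⁴` to `ℤ⁴`. -/
noncomputable def nahmTerm (q : ℂ) (x : ℤ × ℤ × ℤ × ℤ) : ℂ :=
  q ^ nahmExponent x.1 x.2.1 x.2.2.1 x.2.2.2 * invQPoch (q ^ 2) x.1 * invQPoch (q ^ 2) x.2.1 *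
    invQPoch (q ^ 2) x.2.2.1 * invQPoch (q ^ 2) x.2.2.2

/-- The parametrization `i = j + l + u + 1`, `k = l + u - s` of the summation indices by
`((s, u), l), j`. -/
def nahmCoords : ((ℤ × ℤ) × ℤ) × ℤ ≃ ℤ × ℤ × ℤ × ℤ where
  toFun x := (x.2 + (x.1.2 + x.1.1.2 + 1), x.2, x.1.2 + (x.1.1.2 - x.1.1.1), x.1.2)
  invFun y := (((y.1 - y.2.1 - 1 - y.2.2.1, y.1 - y.2.1 - 1 - y.2.2.2), y.2.2.2), y.2.1)
  left_inv x := by ext <;> dsimp <;> ring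
  right_inv y := by ext <;> dsimp <;> ring

variable {q : ℂ}

-- Twice the exponent is a sum of four quadratic polynomials, in `i`, `j`, `k - l` and
-- `k + l - i + j`, so the powers of `q` are dominated by a product of four theta series in `√q`.
lemma summable_norm_zpow_nahmExponent (hq₀ : q ≠ 0) (hq : ‖q‖ < 1) :
    Summable fun x : ℤ × ℤ × ℤ × ℤ => ‖q ^ nahmExponent x.1 x.2.1 x.2.2.1 x.2.2.2‖ := by
  obtain ⟨p, rfl⟩ : ∃ p : ℂ, p ^ 2 = q := IsAlgClosed.exists_pow_nat_eq q two_pos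
  have hp₀ : p ≠ 0 := ne_zero_pow two_ne_zero hq₀
  have hp : ‖p‖ < 1 := by
    rwa [norm_pow, pow_lt_one_iff_of_nonneg (norm_nonneg p) two_ne_zero] at hq
  have hθ (b : ℤ) := summable_norm_zpow_quadratic hp₀ hp two_ne_zero b 0
  have hinj : Function.Injective fun x : ℤ × ℤ × ℤ × ℤ =>
      (((x.1, x.2.1), x.2.2.1 - x.2.2.2), x.2.2.1 + x.2.2.2 - x.1 + x.2.1) := by
    rintro ⟨i, j, k, l⟩ ⟨i', j', k', l'⟩ h
    simp only [Prod.mk.injEq] at h ⊢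
    omega
  refine (((((hθ (-1)).mul_norm (hθ 1)).mul_norm (hθ 1)).mul_norm (hθ 5)).comp_injective
    hinj).congr fun x => ?_
  simp only [Function.comp_apply, ← zpow_add₀ hp₀]
  rw [← zpow_natCast p 2, ← zpow_mul, nahmExponent]
  congr 2
  push_cast
  ring

lemma summable_nahmTerm (hq₀ : q ≠ 0) (hq : ‖q‖ < 1) : Summable (nahmTerm q) := by
  have hq₂ := norm_sq_lt_one hq
  exact (summable_norm_mul_invQPoch hq₂ (summable_norm_mul_invQPoch hq₂
    (summable_norm_mul_invQPoch hq₂ (summable_norm_mul_invQPoch hq₂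
      (summable_norm_zpow_nahmExponent hq₀ hq) _) _) _) _).of_norm

lemma hasSum_nahmTerm_nahmCoords (hq₀ : q ≠ 0) (hq : ‖q‖ < 1) (s u l : ℤ) :
    HasSum (fun j => nahmTerm q (nahmCoords (((s, u), l), j)))
      (q ^ (s ^ 2 + u ^ 2 + u - 1) / qPochInf (q ^ 2) (q ^ 2) *
        (q ^ ((l + (u - s)) ^ 2 + l ^ 2 + (l + (u - s)) + l) *
          invQPoch (q ^ 2) (l + (u - s)) * invQPoch (q ^ 2) l)) := by
  set c := q ^ (s ^ 2 + u ^ 2 + u - 1) * q ^ ((l + (u - s)) ^ 2 + l ^ 2 + (l + (u - s)) + l) *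
    q ^ (-(l + u + 1) ^ 2) * invQPoch (q ^ 2) (l + (u - s)) * invQPoch (q ^ 2) l with hc
  have hvalue : q ^ (s ^ 2 + u ^ 2 + u - 1) / qPochInf (q ^ 2) (q ^ 2) *
      (q ^ ((l + (u - s)) ^ 2 + l ^ 2 + (l + (u - s)) + l) *
        invQPoch (q ^ 2) (l + (u - s)) * invQPoch (q ^ 2) l) =
      c * (q ^ (l + u + 1) ^ 2 / qPochInf (q ^ 2) (q ^ 2)) := by
    rw [hc, zpow_neg]
    field_simp
  rw [hvalue]
  refine ((hasSum_zpow_sq_add_sq_mul_invQPoch hq₀ hq (l + u + 1)).mul_left c).congr_fun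
    fun j => ?_
  have hexp : q ^ nahmExponent (j + (l + u + 1)) j (l + (u - s)) l =
      q ^ (s ^ 2 + u ^ 2 + u - 1) * q ^ ((l + (u - s)) ^ 2 + l ^ 2 + (l + (u - s)) + l) *
        q ^ (-(l + u + 1) ^ 2) * q ^ ((j + (l + u + 1)) ^ 2 + j ^ 2) := by
    simp only [← zpow_add₀ hq₀, nahmExponent]
    ring_nf
  simp only [nahmTerm, nahmCoords, Equiv.coe_fn_mk]
  rw [hexp, hc]
  ring

lemma hasSum_zpow_mul_pairSum (hq₀ : q ≠ 0) (hq : ‖q‖ < 1) :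
    HasSum (fun x : ℤ × ℤ => q ^ (x.1 ^ 2 + x.2 ^ 2 + x.2 - 1) / qPochInf (q ^ 2) (q ^ 2) *
      pairSum q (x.2 - x.1)) (∑' x, nahmTerm q x) := by
  have hsum : HasSum (fun y => nahmTerm q (nahmCoords y)) (∑' x, nahmTerm q x) :=
    nahmCoords.hasSum_iff.mpr (summable_nahmTerm hq₀ hq).hasSum
  have hsum_j (y : (ℤ × ℤ) × ℤ) := hasSum_nahmTerm_nahmCoords hq₀ hq y.1.1 y.1.2 y.2
  have hsum_l (x : ℤ × ℤ) := (hasSum_pairSum hq₀ hq (x.2 - x.1)).mul_left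
    (q ^ (x.1 ^ 2 + x.2 ^ 2 + x.2 - 1) / qPochInf (q ^ 2) (q ^ 2))
  exact (hsum.prod_fiberwise hsum_j).prod_fiberwise hsum_l

-- The reflection `(s, u) ↦ (-s, -1 - u)` fixes the prefactor of `pairSum q (u - s)` and turns this
-- into `pairSum q (u - s + 1)`, so that the sum of the two is given by a single power of `q`.
theorem tsum_nahmTerm (hq₀ : q ≠ 0) (hq : ‖q‖ < 1) :
    ∑' x, nahmTerm q x = q ^ (-1 : ℤ) * ramanujanPsi q * ramanujanPsi (q ^ 3) / J q 2 ^ 2 := by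
  have hsum := hasSum_zpow_mul_pairSum hq₀ hq
  have hreflected := ((Equiv.neg ℤ).prodCongr (Equiv.subLeft (-1 : ℤ))).hasSum_iff.mpr hsum
  have htheta := (hasSum_hexagonalTheta hq₀ hq).mul_left (q ^ (-1 : ℤ) / J q 2 ^ 2)
  have htwice := (hsum.add hreflected).unique (htheta.congr_fun fun ⟨s, u⟩ => ?_)
  · linear_combination htwice / 2
  · have hpair : pairSum q (-1 - u - -s) = pairSum q (u - s + 1) := by
      rw [← pairSum_neg]
      ring_nf
    have hexp_reflected : (-s) ^ 2 + (-1 - u) ^ 2 + (-1 - u) - 1 = s ^ 2 + u ^ 2 + u - 1 := by ring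
    have hexp : q ^ (s ^ 2 + u ^ 2 + u - 1) * q ^ ((u - s) ^ 2 + (u - s)) =
        q ^ (-1 : ℤ) * q ^ (2 * s ^ 2 - 2 * s * u + 2 * u ^ 2 + 2 * u - s) := by
      simp only [← zpow_add₀ hq₀]
      ring_nf
    simp only [Function.comp_apply, Equiv.prodCongr_apply, Prod.map_apply, Equiv.neg_apply,
      Equiv.subLeft_apply]
    rw [hpair, hexp_reflected, ← mul_add, pairSum_add_pairSum_succ hq₀ hq, div_mul_div_comm, hexp,
      J, ← sq, mul_div_right_comm]

lemma support_nahmTerm_subset_range (q : ℂ) :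
    Function.support (nahmTerm q) ⊆
      Set.range (Prod.map (↑) (Prod.map (↑) (Prod.map (↑) (↑))) : ℕ × ℕ × ℕ × ℕ → _) := by
  rintro ⟨i, j, k, l⟩ h
  simp only [nahmTerm, Function.mem_support, mul_ne_zero_iff] at h
  obtain ⟨⟨⟨⟨-, hi⟩, hj⟩, hk⟩, hl⟩ := h
  have hrange := support_invQPoch_subset_range_natCast (q ^ 2)
  obtain ⟨i, rfl⟩ := hrange hi
  obtain ⟨j, rfl⟩ := hrange hj
  obtain ⟨k, rfl⟩ := hrange hk
  obtain ⟨l, rfl⟩ := hrange hl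
  exact ⟨(i, j, k, l), rfl⟩

lemma tsum_natCast_nahmTerm (q : ℂ) :
    ∑' p : ℕ × ℕ × ℕ × ℕ, nahmTerm q (p.1, p.2.1, p.2.2.1, p.2.2.2) = ∑' x, nahmTerm q x :=
  have hinj := Nat.cast_injective (R := ℤ)
  (hinj.prodMap (hinj.prodMap (hinj.prodMap hinj))).tsum_eq (support_nahmTerm_subset_range q)

end NahmSum

theorem stmt_8 (q : ℂ) (h0 : 0 < ‖q‖) (h1 : ‖q‖ < 1) :
    (∑' p : ℕ × ℕ × ℕ × ℕ,
      (fun (i j k l : ℕ) =>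
        q ^ ((2*(i:ℤ)^2 + 2*(j:ℤ)^2 + 2*(k:ℤ)^2 + 2*(l:ℤ)^2 - 2*(i:ℤ)*(j:ℤ) - 2*(i:ℤ)*(k:ℤ) - 2*(i:ℤ)*(l:ℤ) + 2*(j:ℤ)*(k:ℤ) + 2*(j:ℤ)*(l:ℤ) - 3*(i:ℤ) + 3*(j:ℤ) + 3*(k:ℤ) + 2*(l:ℤ)) : ℤ) /
          (qPoch (q ^ 2) (q ^ 2) i * qPoch (q ^ 2) (q ^ 2) j * qPoch (q ^ 2) (q ^ 2) k * qPoch (q ^ 2) (q ^ 2) l))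
        p.1 p.2.1 p.2.2.1 p.2.2.2)
    = q ^ ((-1 : ℤ)) * (J q 6)^2 / (J q 1 * J q 3) := by
  have hq₀ : q ≠ 0 := norm_pos_iff.mp h0
  have hq₃ : ‖q ^ 3‖ < 1 := norm_pow_lt_one h1 three_ne_zero
  have hψ : ramanujanPsi q = J q 2 ^ 2 / J q 1 := ramanujanPsi_eq hq₀ h1
  have hψ₃ : ramanujanPsi (q ^ 3) = J q 6 ^ 2 / J q 3 := by
    rw [ramanujanPsi_eq (pow_ne_zero 3 hq₀) hq₃, J_pow, J_pow]
  have hJ₂ : J q 2 ≠ 0 := J_ne_zero h1 two_ne_zero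
  calc
    _ = ∑' p : ℕ × ℕ × ℕ × ℕ, nahmTerm q (p.1, p.2.1, p.2.2.1, p.2.2.2) :=
      tsum_congr fun p => by
        simp only [nahmTerm, nahmExponent, invQPoch_natCast, div_eq_mul_inv, mul_inv, mul_assoc]
    _ = q ^ (-1 : ℤ) * ramanujanPsi q * ramanujanPsi (q ^ 3) / J q 2 ^ 2 := by
      rw [tsum_natCast_nahmTerm, tsum_nahmTerm hq₀ h1]
    _ = q ^ (-1 : ℤ) * J q 6 ^ 2 / (J q 1 * J q 3) := by
      rw [hψ, hψ₃]
      field_simp
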